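/- arXiv:1505.04602 — 2 statements merged into one kernel-verified Lean document; each statement's English description precedes it below -/
import Mathlib

section
/- Let n ≥ 2, let G be a connected simple graph on Fin n, and let S be a subset of the edge set of G. Then the spanning subgraph of G on the vertex set Fin n whose edge set is S is a spanning tree of G (i.e., it is connected and acyclic) if and only if the family (χ(e))_{e ∈ S} is a basis of the vector space (Fin (n-1) → ZMod 2) over ZMod 2. -/
/-- The coding vector of an unordered pair of vertices of `Fin n`:
for `e = {i,j}` with `i < j`, coordinate `k` is `1` iff `i ≤ k < j`. -/
def chi (n : ℕ) : Sym2 (Fin n) → (Fin (n - 1) → ZMod 2) :=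
  Sym2.lift ⟨fun i j k => if min i.val j.val ≤ k.val ∧ k.val < max i.val j.val then 1 else 0,
    fun i j => by funext k; dsimp only; rw [min_comm, max_comm]⟩

/-- `Cseg N` is the set of nonzero vectors of `Fin N → ZMod 2` whose support is an
interval of consecutive indices (the consecutive 1's property). -/
def Cseg (N : ℕ) : Set (Fin N → ZMod 2) :=
  {v | v ≠ 0 ∧ ∃ a b : ℕ, ∀ k : Fin N, v k = 1 ↔ a ≤ k.val ∧ k.val < b}

/-- A finite set of vectors is reduced if it is nonempty and every nonempty proper
subset has nonzero sum. -/
def IsReducedSet {N : ℕ} (S : Finset (Fin N → ZMod 2)) : Prop :=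
  S.Nonempty ∧ ∀ A : Finset (Fin N → ZMod 2), A ⊂ S → A.Nonempty → ∑ v ∈ A, v ≠ 0

/-!
Place the vertices at the points `b i` of an affine basis, so that an edge `{i, j}` becomes the
displacement `b i -ᵥ b j`, up to sign. A walk from `i` to `j` telescopes to `b i -ᵥ b j`.
Conversely, some linear map sends each `b i -ᵥ b j` to `[i] - [j]`, where `[i]` is the generator of
the free module on the connected components that belongs to the component of `i`; it kills every
edge. Hence `b i -ᵥ b j` lies in the span of the edges exactly when `i` and `j` are connected: the
edges span everything iff the graph is connected, and no edge is redundant iff every edge is a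
bridge. The coding vector of `{i, j}` is the displacement between the `i`-th and `j`-th prefix
indicators, and these form an affine basis.
-/

section EdgeDisplacement

open SimpleGraph

variable {V K M P : Type*} [AddCommGroup M] [AddTorsor M P]

/-- `f` is a signed incidence map for vertices placed at the points `p i`: it sends each unordered
pair to the displacement between its end points, taken in one of the two directions. The direction
may be chosen for each pair separately, as an orientation is arbitrary. -/
def IsEdgeDisplacement (p : V → P) (f : Sym2 V → M) : Prop :=
  ∀ i j, f s(i, j) = p i -ᵥ p j ∨ f s(i, j) = p j -ᵥ p i

variable [Ring K] [Module K M] {p : V → P} {f : Sym2 V → M} {S : Set (Sym2 V)}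

theorem IsEdgeDisplacement.smul_mem_iff (hf : IsEdgeDisplacement p f) (W : Submodule K M)
    (a : K) (i j : V) : a • f s(i, j) ∈ W ↔ a • (p i -ᵥ p j) ∈ W := by
  rcases hf i j with h | h
  · rw [h]
  · rw [h, ← neg_vsub_eq_vsub_rev, smul_neg, neg_mem_iff]

theorem IsEdgeDisplacement.mem_iff (hf : IsEdgeDisplacement p f) (W : Submodule K M) (i j : V) :
    f s(i, j) ∈ W ↔ p i -ᵥ p j ∈ W := by
  simpa only [one_smul] using hf.smul_mem_iff W 1 i j

theorem IsEdgeDisplacement.vsub_mem_span_of_reachable (hf : IsEdgeDisplacement p f) {i j : V}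
    (h : (fromEdgeSet S).Reachable i j) : p i -ᵥ p j ∈ Submodule.span K (f '' S) := by
  obtain ⟨w⟩ := h
  induction w with
  | nil => rw [vsub_self]; exact zero_mem _
  | @cons i j k hij _ ih =>
    have hedge : f s(i, j) ∈ Submodule.span K (f '' S) :=
      Submodule.subset_span ⟨_, ((fromEdgeSet_adj S).1 hij).1, rfl⟩
    rw [← vsub_add_vsub_cancel (p i) (p j) (p k)]
    exact add_mem ((hf.mem_iff _ i j).1 hedge) ih

theorem exists_linearMap_apply_vsub_eq_sub {N : Type*} [AddCommGroup N] [Module K N]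
    (b : AffineBasis V K P) (g : V → N) :
    ∃ φ : M →ₗ[K] N, ∀ i j, φ (b i -ᵥ b j) = g i - g j := by
  obtain ⟨o⟩ := b.nonempty
  let φ : M →ₗ[K] N := (b.basisOf o).constr ℕ fun k => g k - g o
  have hφ (i : V) : φ (b i -ᵥ b o) = g i - g o := by
    by_cases hi : i = o
    · rw [hi, vsub_self, map_zero, sub_self]
    · rw [← b.basisOf_apply o ⟨i, hi⟩]
      exact (b.basisOf o).constr_basis ℕ _ _
  refine ⟨φ, fun i j => ?_⟩
  rw [← vsub_sub_vsub_cancel_right (b i) (b j) (b o), map_sub, hφ, hφ, sub_sub_sub_cancel_right]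

-- The scalar `a` is what makes linear independence testable over a ring without division.
theorem IsEdgeDisplacement.smul_vsub_mem_span_iff {b : AffineBasis V K P}
    (hf : IsEdgeDisplacement b f) (a : K) (i j : V) :
    a • (b i -ᵥ b j) ∈ Submodule.span K (f '' S) ↔ a = 0 ∨ (fromEdgeSet S).Reachable i j := by
  constructor
  · intro hmem
    let component (v : V) : (fromEdgeSet S).ConnectedComponent →₀ K :=
      Finsupp.single ((fromEdgeSet S).connectedComponentMk v) 1
    obtain ⟨φ, hφ⟩ := exists_linearMap_apply_vsub_eq_sub b component
    have span_le_ker : Submodule.span K (f '' S) ≤ LinearMap.ker φ := by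
      rw [Submodule.span_le]
      rintro _ ⟨⟨k, l⟩, hkl, rfl⟩
      have hreach : (fromEdgeSet S).Reachable k l := by
        by_cases h : k = l
        · rw [h]
        · exact Adj.reachable ((fromEdgeSet_adj S).2 ⟨hkl, h⟩)
      refine (hf.mem_iff _ k l).2 ?_
      rw [LinearMap.mem_ker, hφ, sub_eq_zero]
      exact congrArg (Finsupp.single · 1) (ConnectedComponent.sound hreach)
    have hzero : a • component i = a • component j := by
      rw [← sub_eq_zero, ← smul_sub, ← hφ, ← map_smul]
      exact span_le_ker hmem
    rw [or_iff_not_imp_left]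
    intro ha
    rw [Finsupp.smul_single_one, Finsupp.smul_single_one, Finsupp.single_left_inj ha] at hzero
    exact ConnectedComponent.exact hzero
  · rintro (rfl | h)
    · rw [zero_smul]; exact zero_mem _
    · exact Submodule.smul_mem _ a (hf.vsub_mem_span_of_reachable h)

variable [Nontrivial K] {b : AffineBasis V K P}

theorem IsEdgeDisplacement.vsub_mem_span_iff (hf : IsEdgeDisplacement b f) (i j : V) :
    b i -ᵥ b j ∈ Submodule.span K (f '' S) ↔ (fromEdgeSet S).Reachable i j := by
  simpa only [one_smul, one_ne_zero, false_or] using hf.smul_vsub_mem_span_iff (S := S) 1 i j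

theorem IsEdgeDisplacement.span_eq_top_iff_connected (hf : IsEdgeDisplacement b f) :
    Submodule.span K (f '' S) = ⊤ ↔ (fromEdgeSet S).Connected := by
  constructor
  · intro hspan
    have := b.nonempty
    exact ⟨fun i j => (hf.vsub_mem_span_iff i j).1 (hspan ▸ Submodule.mem_top)⟩
  · intro hconn
    have hvec : vectorSpan K (Set.range b) = ⊤ :=
      AffineSubspace.vectorSpan_eq_top_of_affineSpan_eq_top K M P b.tot
    rw [eq_top_iff, ← hvec, vectorSpan_def, Submodule.span_le]
    rintro _ ⟨_, ⟨i, rfl⟩, _, ⟨j, rfl⟩, rfl⟩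
    exact hf.vsub_mem_span_of_reachable (hconn.preconnected i j)

theorem IsEdgeDisplacement.linearIndepOn_iff_isAcyclic (hf : IsEdgeDisplacement b f)
    (hS : ∀ e ∈ S, ¬ e.IsDiag) : LinearIndepOn K f S ↔ (fromEdgeSet S).IsAcyclic := by
  have himage (e : S) : (fun e : S => f e) '' (Set.univ \ {e}) = f '' (S \ {e.val}) := by
    rw [← Set.image_image f Subtype.val, Set.image_sdiff Subtype.val_injective,
      Set.image_univ, Subtype.range_coe, Set.image_singleton]
  have hedges : (fromEdgeSet S).edgeSet = S := by
    rw [edgeSet_fromEdgeSet]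
    exact sdiff_eq_left.2 (Set.disjoint_left.2 hS)
  have hbridge (e : Sym2 V) (a : K) :
      a • f e ∈ Submodule.span K (f '' (S \ {e})) ↔ a = 0 ∨ ¬ (fromEdgeSet S).IsBridge e := by
    cases e with
    | h i j =>
      rw [hf.smul_mem_iff, hf.smul_vsub_mem_span_iff, isBridge_iff, not_not, deleteEdges,
        fromEdgeSet_sdiff]
  rw [LinearIndepOn, linearIndependent_iff_eq_zero_of_smul_mem_span,
    isAcyclic_iff_forall_isBridge, hedges]
  simp only [himage, hbridge]
  constructor
  · intro h e he
    by_contra hnot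
    exact one_ne_zero (h ⟨e, he⟩ 1 (Or.inr hnot))
  · exact fun h e a ha => ha.resolve_right (not_not_intro (h e.2))

end EdgeDisplacement

section PrefixIndicator

/-- The indicator vector of the first `i` of `m` coordinates; a coding vector is the difference of
two of these. -/
def prefixIndicator (R : Type*) [Zero R] [One R] (m : ℕ) (i : Fin (m + 1)) : Fin m → R :=
  fun k => if k.castSucc < i then 1 else 0

theorem prefixIndicator_succ_sub_castSucc (R : Type*) [Ring R] {m : ℕ} (k : Fin m) :
    prefixIndicator R m k.succ - prefixIndicator R m k.castSucc = Pi.single k 1 := by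
  ext l
  rcases lt_trichotomy l k with h | h | h
  · simp [prefixIndicator, h, h.ne, h.le]
  · simp [prefixIndicator, h]
  · simp [prefixIndicator, h.ne', h.not_gt, h.not_ge]

theorem vectorSpan_range_prefixIndicator (R : Type*) [Ring R] (m : ℕ) :
    vectorSpan R (Set.range (prefixIndicator R m)) = ⊤ := by
  rw [eq_top_iff, ← (Pi.basisFun R (Fin m)).span_eq, Submodule.span_le]
  rintro _ ⟨k, rfl⟩
  rw [Pi.basisFun_apply, ← prefixIndicator_succ_sub_castSucc]
  exact vsub_mem_vectorSpan R (Set.mem_range_self _) (Set.mem_range_self _)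

/-- The prefix indicators as an affine basis of the space of all vectors; in it the coding vectors
are displacements between basis points. -/
def prefixAffineBasis (K : Type*) [DivisionRing K] (m : ℕ) :
    AffineBasis (Fin (m + 1)) K (Fin m → K) where
  toFun := prefixIndicator K m
  ind' := by
    rw [affineIndependent_iff_finrank_vectorSpan_eq K _ (Fintype.card_fin _),
      vectorSpan_range_prefixIndicator, finrank_top, Module.finrank_fin_fun]
  tot' := (AffineSubspace.affineSpan_eq_top_iff_vectorSpan_eq_top_of_nonempty K _ _
    (Set.range_nonempty _)).2 (vectorSpan_range_prefixIndicator K m)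

theorem coe_prefixAffineBasis (K : Type*) [DivisionRing K] (m : ℕ) :
    ⇑(prefixAffineBasis K m) = prefixIndicator K m :=
  rfl

theorem isEdgeDisplacement_chi (m : ℕ) :
    IsEdgeDisplacement (prefixAffineBasis (ZMod 2) m) (chi (m + 1)) := by
  intro i j
  left
  ext k
  simp only [chi, Sym2.lift_mk, coe_prefixAffineBasis, prefixIndicator, vsub_eq_sub,
    Pi.sub_apply, Fin.lt_def, Fin.val_castSucc]
  split_ifs <;> first | omega | rfl

end PrefixIndicator

theorem stmt8_general {V K M P : Type*} [AddCommGroup M] [AddTorsor M P] [Ring K] [Nontrivial K]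
    [Module K M] {b : AffineBasis V K P} {f : Sym2 V → M} (hf : IsEdgeDisplacement b f)
    {S : Set (Sym2 V)} (hS : ∀ e ∈ S, ¬ e.IsDiag) :
    ((SimpleGraph.fromEdgeSet S).Connected ∧ (SimpleGraph.fromEdgeSet S).IsAcyclic) ↔
      (LinearIndependent K (fun e : S => f e.val) ∧
        Submodule.span K (Set.range fun e : S => f e.val) = ⊤) := by
  rw [← Set.image_eq_range, hf.span_eq_top_iff_connected, ← hf.linearIndepOn_iff_isAcyclic hS,
    and_comm, LinearIndepOn]

theorem stmt8 (n : ℕ) (hn : 2 ≤ n) (G : SimpleGraph (Fin n)) (hG : G.Connected)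
    (S : Set (Sym2 (Fin n))) (hS : S ⊆ G.edgeSet) :
    ((SimpleGraph.fromEdgeSet S).Connected ∧ (SimpleGraph.fromEdgeSet S).IsAcyclic) ↔
      (LinearIndependent (ZMod 2) (fun e : S => chi n e.val) ∧
        Submodule.span (ZMod 2) (Set.range fun e : S => chi n e.val) = ⊤) := by
  obtain ⟨m, rfl⟩ : ∃ m, n = m + 1 := ⟨n - 1, by omega⟩
  exact stmt8_general (isEdgeDisplacement_chi m) fun _ he => G.not_isDiag_of_mem_edgeSet (hS he)
end

section
/- Let n ≥ 2, let G be a simple graph on Fin n, and let S be a nonempty finite subset of the edge set of G. Then the edges in S form a path in G (i.e., there exist distinct vertices u, v and a path walk in G from u to v whose edge set is exactly S) if and only if ∑_{e ∈ S} χ(e) ∈ C(n-1) and the set {χ(e) : e ∈ S} is reduced. -/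
/-! The boundary `∂{i, j} = 𝟙ᵢ + 𝟙ⱼ` of an edge, taken modulo 2, determines its coding vector by
partial summation, `χ(e)ₖ = ∑_{i ≤ k} (∂e)ᵢ`, and partial summation is injective on vectors of even
weight. So sums of coding vectors may be replaced by boundaries of edge sets.
A path from `u` to `v` has boundary `𝟙ᵤ + 𝟙ᵥ`, and no nonempty set of its edges has zero boundary,
since the first edge of the path in such a set would meet no other edge of the set at its first
endpoint. Conversely, a set `S` with boundary `𝟙ᵤ + 𝟙ᵥ` contains the edge set `P` of a path from `u`
to `v`; then `S \ P` has zero boundary and misses the nonempty set `P`, so `S = P` as soon as `S` is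
reduced. -/

section EdgeBoundary

variable {V : Type*} [DecidableEq V]

/-- The boundary operator of mod 2 simplicial homology on single edges, with values in `0`-chains.
A loop is allowed and has zero boundary. -/
def edgeBoundary : Sym2 V → V → ZMod 2 :=
  Sym2.lift ⟨fun i j => Pi.single i 1 + Pi.single j 1, fun _ _ => add_comm _ _⟩

lemma edgeBoundary_mk (i j : V) : edgeBoundary s(i, j) = Pi.single i 1 + Pi.single j 1 := rfl

lemma edgeBoundary_self (i : V) : edgeBoundary s(i, i) = 0 := ZModModule.add_self _

lemma edgeBoundary_add_edgeBoundary (i j k : V) :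
    edgeBoundary s(i, j) + edgeBoundary s(j, k) = edgeBoundary s(i, k) := by
  rw [edgeBoundary_mk, edgeBoundary_mk, edgeBoundary_mk, add_assoc, ← add_assoc (Pi.single j 1),
    ZModModule.add_self, zero_add]

lemma edgeBoundary_apply_ne_zero_iff {e : Sym2 V} {u : V} :
    edgeBoundary e u ≠ 0 ↔ ¬ e.IsDiag ∧ u ∈ e := by
  induction e with
  | _ i j =>
    have two_eq_zero : (1 : ZMod 2) + 1 = 0 := rfl
    simp only [edgeBoundary_mk, Pi.add_apply, Pi.single_apply, Sym2.mk_isDiag_iff, Sym2.mem_iff]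
    grind

lemma edgeBoundary_mk_ne_zero {i j : V} (hij : i ≠ j) : edgeBoundary s(i, j) ≠ 0 := fun h =>
  edgeBoundary_apply_ne_zero_iff.2 ⟨by simpa using hij, Sym2.mem_mk_left i j⟩ (congrFun h i)

lemma injOn_edgeBoundary : Set.InjOn (edgeBoundary (V := V)) {e | ¬ e.IsDiag} := by
  intro e he f hf hef
  have mem_iff {g : Sym2 V} (hg : ¬ g.IsDiag) (u : V) : u ∈ g ↔ edgeBoundary g u ≠ 0 := by
    rw [edgeBoundary_apply_ne_zero_iff, and_iff_right hg]
  exact Sym2.ext fun u => by rw [mem_iff he, mem_iff hf, hef]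

lemma sum_univ_edgeBoundary_apply [Fintype V] (e : Sym2 V) : ∑ u, edgeBoundary e u = 0 := by
  induction e with
  | _ i j =>
    simp only [edgeBoundary_mk, Pi.add_apply, Finset.sum_add_distrib, Fintype.sum_pi_single',
      CharTwo.add_self_eq_zero]

lemma exists_mem_ne_of_sum_edgeBoundary_eq_zero {B : Finset (Sym2 V)}
    (hB : ∑ e ∈ B, edgeBoundary e = 0) {e : Sym2 V} (heB : e ∈ B) (he : ¬ e.IsDiag)
    {u : V} (hu : u ∈ e) : ∃ f ∈ B, f ≠ e ∧ u ∈ f := by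
  by_contra! h
  have only_e : ∑ f ∈ B, edgeBoundary f u = edgeBoundary e u :=
    Finset.sum_eq_single_of_mem e heB fun f hf hfe =>
      not_not.1 fun h0 => h f hf hfe (edgeBoundary_apply_ne_zero_iff.1 h0).2
  rw [← Finset.sum_apply, hB] at only_e
  exact edgeBoundary_apply_ne_zero_iff.2 ⟨he, hu⟩ only_e.symm

lemma reachable_fromEdgeSet_of_sum_edgeBoundary_eq {S : Finset (Sym2 V)} {u v : V}
    (h : ∑ e ∈ S, edgeBoundary e = edgeBoundary s(u, v)) :
    (SimpleGraph.fromEdgeSet (S : Set (Sym2 V))).Reachable u v := by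
  induction S using Finset.strongInduction generalizing u with
  | H S ih =>
    obtain rfl | huv := eq_or_ne u v
    · rfl
    have odd_at_u : ∑ e ∈ S, edgeBoundary e u ≠ 0 := by
      rw [← Finset.sum_apply, h, edgeBoundary_apply_ne_zero_iff]
      exact ⟨by simpa using huv, Sym2.mem_mk_left u v⟩
    obtain ⟨e, heS, he⟩ := Finset.exists_ne_zero_of_sum_ne_zero odd_at_u
    obtain ⟨he_diag, c, rfl⟩ := edgeBoundary_apply_ne_zero_iff.1 he
    have erase_boundary :
        ∑ e ∈ S.erase s(u, c), edgeBoundary e = edgeBoundary s(c, v) := by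
      rw [← edgeBoundary_add_edgeBoundary u c v, ← Finset.add_sum_erase S _ heS] at h
      exact add_left_cancel h
    have adj : (SimpleGraph.fromEdgeSet (S : Set (Sym2 V))).Adj u c :=
      (SimpleGraph.fromEdgeSet_adj _).2 ⟨heS, by simpa using he_diag⟩
    have reach_erase := ih _ (Finset.erase_ssubset heS) erase_boundary
    exact adj.reachable.trans <| reach_erase.mono <|
      SimpleGraph.fromEdgeSet_mono (Finset.coe_subset.2 (Finset.erase_subset _ S))

variable {G : SimpleGraph V} {u v : V}

lemma sum_map_edgeBoundary_edges (w : G.Walk u v) :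
    (w.edges.map edgeBoundary).sum = edgeBoundary s(u, v) := by
  induction w with
  | nil => exact (edgeBoundary_self _).symm
  | cons h p ih =>
    rw [SimpleGraph.Walk.edges_cons, List.map_cons, List.sum_cons, ih,
      edgeBoundary_add_edgeBoundary]

lemma sum_edgeBoundary_edges_toFinset {w : G.Walk u v} (hw : w.IsTrail) :
    ∑ e ∈ w.edges.toFinset, edgeBoundary e = edgeBoundary s(u, v) := by
  rw [List.sum_toFinset _ hw.edges_nodup, sum_map_edgeBoundary_edges]

lemma eq_empty_of_isPath_of_sum_edgeBoundary_eq_zero {w : G.Walk u v} (hw : w.IsPath)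
    {B : Finset (Sym2 V)} (hBw : ∀ e ∈ B, e ∈ w.edges)
    (hB : ∑ e ∈ B, edgeBoundary e = 0) : B = ∅ := by
  induction w with
  | nil => exact Finset.eq_empty_of_forall_notMem fun e he => by simpa using hBw e he
  | @cons u c v h p ih =>
    rw [SimpleGraph.Walk.cons_isPath_iff] at hw
    simp only [SimpleGraph.Walk.edges_cons, List.mem_cons] at hBw
    have first_edge_notMem : s(u, c) ∉ B := by
      intro hmem
      obtain ⟨f, hfB, hf_ne, huf⟩ := exists_mem_ne_of_sum_edgeBoundary_eq_zero hB hmem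
        (by simpa using h.ne) (Sym2.mem_mk_left u c)
      exact hw.2 (p.mem_support_of_mem_edges ((hBw f hfB).resolve_left hf_ne) huf)
    exact ih hw.1 fun e he => (hBw e he).resolve_left fun h => first_edge_notMem (h ▸ he)

lemma exists_isPath_edges_subset_of_sum_edgeBoundary_eq {S : Finset (Sym2 V)}
    (hS : ↑S ⊆ G.edgeSet) (h : ∑ e ∈ S, edgeBoundary e = edgeBoundary s(u, v)) :
    ∃ w : G.Walk u v, w.IsPath ∧ w.edges.toFinset ⊆ S := by
  have fromEdgeSet_le : SimpleGraph.fromEdgeSet (S : Set (Sym2 V)) ≤ G := fun i j hij =>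
    hS ((SimpleGraph.fromEdgeSet_adj _).1 hij).1
  obtain ⟨p, hp⟩ := (reachable_fromEdgeSet_of_sum_edgeBoundary_eq h).exists_isPath
  refine ⟨p.mapLe fromEdgeSet_le, hp.mapLe fromEdgeSet_le, fun e he => ?_⟩
  rw [SimpleGraph.Walk.edges_mapLe_eq_edges, List.mem_toFinset] at he
  have mem_edgeSet := p.edges_subset_edgeSet he
  rw [SimpleGraph.edgeSet_fromEdgeSet] at mem_edgeSet
  exact mem_edgeSet.1

theorem exists_isPath_edges_toFinset_eq_iff (huv : u ≠ v) {S : Finset (Sym2 V)}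
    (hS : ↑S ⊆ G.edgeSet) :
    (∃ w : G.Walk u v, w.IsPath ∧ w.edges.toFinset = S) ↔
      ∑ e ∈ S, edgeBoundary e = edgeBoundary s(u, v) ∧
        ∀ B ⊂ S, B.Nonempty → ∑ e ∈ B, edgeBoundary e ≠ 0 := by
  constructor
  · rintro ⟨w, hw, rfl⟩
    refine ⟨sum_edgeBoundary_edges_toFinset hw.isTrail, fun B hB hB_ne hB_zero => ?_⟩
    exact hB_ne.ne_empty <| eq_empty_of_isPath_of_sum_edgeBoundary_eq_zero hw
      (fun e he => List.mem_toFinset.1 (hB.subset he)) hB_zero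
  · rintro ⟨hsum, hred⟩
    obtain ⟨w, hw, hwS⟩ := exists_isPath_edges_subset_of_sum_edgeBoundary_eq hS hsum
    have path_boundary := sum_edgeBoundary_edges_toFinset hw.isTrail
    have path_nonempty : w.edges.toFinset.Nonempty := by
      refine Finset.nonempty_of_sum_ne_zero (f := edgeBoundary) ?_
      exact path_boundary ▸ edgeBoundary_mk_ne_zero huv
    have rest_boundary : ∑ e ∈ S \ w.edges.toFinset, edgeBoundary e = 0 := by
      rw [Finset.sum_sdiff_eq_sub hwS, hsum, path_boundary, sub_self]
    refine ⟨w, hw, hwS.antisymm <| Finset.sdiff_eq_empty_iff_subset.1 ?_⟩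
    by_contra rest_ne
    exact hred _ (Finset.sdiff_ssubset hwS path_nonempty)
      (Finset.nonempty_iff_ne_empty.2 rest_ne) rest_boundary

end EdgeBoundary

section PrefixSum

/-- The vector of partial sums `∑_{i ≤ k} xᵢ`, which turns boundaries of edges into coding vectors.
The total sum `k = n - 1` is left out. -/
def prefixSum (n : ℕ) (M : Type*) [AddCommMonoid M] : (Fin n → M) →+ (Fin (n - 1) → M) where
  toFun x k := ∑ i ∈ Finset.Iic (k.castLE (n.sub_le 1)), x i
  map_zero' := by ext; simp
  map_add' x y := by ext; simp [Finset.sum_add_distrib]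

lemma prefixSum_apply {n : ℕ} {M : Type*} [AddCommMonoid M] (x : Fin n → M) (k : Fin (n - 1)) :
    prefixSum n M x k = ∑ i ∈ Finset.Iic (k.castLE (n.sub_le 1)), x i := rfl

lemma eq_of_prefixSum_eq_of_sum_eq {n : ℕ} {M : Type*} [AddCancelCommMonoid M] {x y : Fin n → M}
    (hprefix : prefixSum n M x = prefixSum n M y) (hsum : ∑ i, x i = ∑ i, y i) : x = y := by
  have sum_Iic_eq (u : Fin n) : ∑ i ∈ Finset.Iic u, x i = ∑ i ∈ Finset.Iic u, y i := by
    by_cases hu : u.val < n - 1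
    · exact congrFun hprefix ⟨u, hu⟩
    · have Iic_eq_univ : Finset.Iic u = Finset.univ :=
        Finset.eq_univ_of_forall fun i => Finset.mem_Iic.2 (Fin.le_def.2 (by omega))
      rw [Iic_eq_univ, hsum]
  ext u
  induction u using WellFoundedLT.induction with
  | ind u ih =>
    have sum_Iio_eq : ∑ i ∈ Finset.Iio u, x i = ∑ i ∈ Finset.Iio u, y i :=
      Finset.sum_congr rfl fun i hi => ih i (Finset.mem_Iio.1 hi)
    have h := sum_Iic_eq u
    rw [← Finset.Iio_insert, Finset.sum_insert Finset.notMem_Iio_self,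
      Finset.sum_insert Finset.notMem_Iio_self, sum_Iio_eq] at h
    exact add_right_cancel h

end PrefixSum

section Coding

variable {n : ℕ}

lemma chi_mk_apply (i j : Fin n) (k : Fin (n - 1)) :
    chi n s(i, j) k = if min i.val j.val ≤ k.val ∧ k.val < max i.val j.val then 1 else 0 := rfl

lemma chi_mk_apply_eq_one_iff {i j : Fin n} {k : Fin (n - 1)} :
    chi n s(i, j) k = 1 ↔ min i.val j.val ≤ k.val ∧ k.val < max i.val j.val := by
  rw [chi_mk_apply, ite_eq_left_iff, not_imp_comm]
  exact imp_iff_right zero_ne_one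

lemma prefixSum_edgeBoundary (e : Sym2 (Fin n)) :
    prefixSum n (ZMod 2) (edgeBoundary e) = chi n e := by
  induction e with
  | _ i j =>
    ext k
    have two_eq_zero : (1 : ZMod 2) + 1 = 0 := rfl
    simp only [prefixSum_apply, edgeBoundary_mk, Pi.add_apply, Finset.sum_add_distrib,
      Finset.sum_pi_single', Finset.mem_Iic, Fin.le_def, Fin.val_castLE, chi_mk_apply]
    grind

lemma sum_chi_eq_sum_chi_iff {S T : Finset (Sym2 (Fin n))} :
    ∑ e ∈ S, chi n e = ∑ e ∈ T, chi n e ↔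
      ∑ e ∈ S, edgeBoundary e = ∑ e ∈ T, edgeBoundary e := by
  have sum_eq_zero (S : Finset (Sym2 (Fin n))) : ∑ u, (∑ e ∈ S, edgeBoundary e) u = 0 := by
    simp only [Finset.sum_apply]
    rw [Finset.sum_comm]
    exact Finset.sum_eq_zero fun e _ => sum_univ_edgeBoundary_apply e
  simp only [← prefixSum_edgeBoundary, ← map_sum]
  refine ⟨fun h => eq_of_prefixSum_eq_of_sum_eq h ?_, congrArg _⟩
  rw [sum_eq_zero, sum_eq_zero]

lemma sum_chi_eq_chi_iff {S : Finset (Sym2 (Fin n))} {f : Sym2 (Fin n)} :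
    ∑ e ∈ S, chi n e = chi n f ↔ ∑ e ∈ S, edgeBoundary e = edgeBoundary f := by
  simpa only [Finset.sum_singleton] using sum_chi_eq_sum_chi_iff (S := S) (T := {f})

lemma sum_chi_eq_zero_iff {S : Finset (Sym2 (Fin n))} :
    ∑ e ∈ S, chi n e = 0 ↔ ∑ e ∈ S, edgeBoundary e = 0 := by
  simpa only [Finset.sum_empty] using sum_chi_eq_sum_chi_iff (S := S) (T := ∅)

lemma chi_eq_chi_iff {e f : Sym2 (Fin n)} :
    chi n e = chi n f ↔ edgeBoundary e = edgeBoundary f := by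
  simpa only [Finset.sum_singleton] using sum_chi_eq_chi_iff (S := {e}) (f := f)

lemma injOn_chi : Set.InjOn (chi n) {e | ¬ e.IsDiag} := fun _ he _ hf h =>
  injOn_edgeBoundary he hf (chi_eq_chi_iff.1 h)

lemma chi_eq_zero_iff {e : Sym2 (Fin n)} : chi n e = 0 ↔ edgeBoundary e = 0 := by
  simpa only [Finset.sum_singleton] using sum_chi_eq_zero_iff (S := {e})

lemma mem_Cseg_iff {x : Fin (n - 1) → ZMod 2} :
    x ∈ Cseg (n - 1) ↔ ∃ a b : Fin n, a ≠ b ∧ x = chi n s(a, b) := by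
  constructor
  · rintro ⟨hx, a, b, hab⟩
    have eq_one_of_ne_zero : ∀ z : ZMod 2, z ≠ 0 → z = 1 := by decide
    have eq_of_one_iff : ∀ y z : ZMod 2, (y = 1 ↔ z = 1) → y = z := by decide
    obtain ⟨k, hk⟩ := Function.ne_iff.1 hx
    have hakb := (hab k).1 (eq_one_of_ne_zero _ hk)
    refine ⟨⟨a, by omega⟩, ⟨min b (n - 1), by omega⟩, Fin.ne_of_val_ne (by dsimp only; omega), ?_⟩
    funext l
    refine eq_of_one_iff _ _ ?_
    rw [hab, chi_mk_apply_eq_one_iff]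
    dsimp only
    omega
  · rintro ⟨a, b, hab, rfl⟩
    exact ⟨fun h => edgeBoundary_mk_ne_zero hab (chi_eq_zero_iff.1 h),
      min a.val b.val, max a.val b.val, fun _ => chi_mk_apply_eq_one_iff⟩

end Coding

lemma isReducedSet_image_iff {ι : Type*} {N : ℕ} {f : ι → Fin N → ZMod 2} {S : Finset ι}
    (hf : Set.InjOn f S) :
    IsReducedSet (S.image f) ↔ S.Nonempty ∧ ∀ B ⊂ S, B.Nonempty → ∑ i ∈ B, f i ≠ 0 := by
  classical
  have sum_image_eq {B : Finset ι} (hB : B ⊆ S) : ∑ v ∈ B.image f, v = ∑ i ∈ B, f i :=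
    Finset.sum_image (hf.mono (Finset.coe_subset.2 hB))
  have image_ssubset_iff {B : Finset ι} (hB : B ⊆ S) : B.image f ⊂ S.image f ↔ B ⊂ S := by
    rw [← Finset.coe_ssubset, Finset.coe_image, Finset.coe_image,
      hf.image_ssubset_image_iff (Finset.coe_subset.2 hB) subset_rfl, Finset.coe_ssubset]
  refine and_congr Finset.image_nonempty ⟨fun h B hB hne => ?_, fun h A hA hne => ?_⟩
  · rw [← sum_image_eq hB.subset]
    exact h _ ((image_ssubset_iff hB.subset).2 hB) (hne.image f)
  · obtain ⟨B, hB, rfl⟩ := Finset.subset_image_iff.1 hA.subset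
    rw [sum_image_eq hB]
    exact h B ((image_ssubset_iff hB).1 hA) (Finset.image_nonempty.1 hne)

theorem stmt15 (n : ℕ) (hn : 2 ≤ n) (G : SimpleGraph (Fin n))
    (S : Finset (Sym2 (Fin n))) (hSne : S.Nonempty) (hS : ↑S ⊆ G.edgeSet) :
    (∃ (u v : Fin n) (w : G.Walk u v), u ≠ v ∧ w.IsPath ∧ w.edges.toFinset = S) ↔
      ((∑ e ∈ S, chi n e) ∈ Cseg (n - 1) ∧ IsReducedSet (S.image (chi n))) := by
  have hinj : Set.InjOn (chi n) S := injOn_chi.mono fun e he => G.not_isDiag_of_mem_edgeSet (hS he)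
  simp only [isReducedSet_image_iff hinj, mem_Cseg_iff, ne_eq, sum_chi_eq_zero_iff,
    sum_chi_eq_chi_iff, hSne, true_and, exists_and_left, ← exists_and_right, and_assoc]
  exact exists₂_congr fun u v => and_congr_right fun huv =>
    exists_isPath_edges_toFinset_eq_iff huv hS
end
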